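/- arXiv:2112.10199 — 9 statements merged into one kernel-verified Lean document; each statement's English description precedes it below -/
import Mathlib

section
/- Let n ≥ 1 agents have positive real weights η_1 ≤ η_2 ≤ … ≤ η_n (nondecreasing) and identical additive valuations over a finite set M of goods given by values u_j ≥ 0, so that the value of a bundle S ⊆ M is v(S) = Σ_{j∈S} u_j. Then there exists an allocation x = (x_1,…,x_n) (a partition of M into n possibly-empty bundles) that maximizes the Nash welfare NW(x) = (∏_{i=1}^n v(x_i)^{η_i})^{1/Σ_i η_i} over all allocations and in addition satisfies: for all 1 ≤ i < j ≤ n with v(x_i) > 0 and v(x_j) > 0, one has v(x_i) ≤ v(x_j). -/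
/-!
Suppose agents `i < j` have bundle values `v_i > v_j > 0`. Exchanging their two bundles multiplies
the weighted product by `(v_i / v_j) ^ (η_j - η_i) ≥ 1` (`rpow_exchange`), so the exchange turns a
Nash-welfare maximizer into another one. It also strictly increases the potential
`∑ k, k * v_k`, by `(j - i) * (v_i - v_j)` (`potential_lt_swap`). Hence a maximizer of this
potential among the (finitely many) Nash-welfare maximizers admits no such pair.
-/

open Finset

/-- The value of agent `i`'s bundle when good `g` is given to agent `x g`. -/
def bundleValue {n : ℕ} {M : Type*} [Fintype M] (u : M → ℝ) (x : M → Fin n) (i : Fin n) : ℝ :=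
  ∑ g ∈ univ.filter (fun g => x g = i), u g

lemma bundleValue_nonneg {n : ℕ} {M : Type*} [Fintype M] {u : M → ℝ} (hu : ∀ j, 0 ≤ u j)
    (x : M → Fin n) (i : Fin n) : 0 ≤ bundleValue u x i :=
  sum_nonneg fun j _ => hu j

lemma bundleValue_perm {n : ℕ} {M : Type*} [Fintype M] (u : M → ℝ) (x : M → Fin n)
    (i j k : Fin n) :
    bundleValue u (fun g => Equiv.swap i j (x g)) k = bundleValue u x (Equiv.swap i j k) := by
  unfold bundleValue
  congr 1
  ext g
  simp only [mem_filter, mem_univ, true_and]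
  rw [Equiv.swap_apply_eq_iff]

/-- Giving the larger value the larger exponent does not decrease the product. -/
lemma rpow_exchange {a b p q : ℝ} (hb : 0 < b) (hab : b ≤ a) (hpq : p ≤ q) :
    a ^ p * b ^ q ≤ b ^ p * a ^ q := by
  have ha : 0 < a := hb.trans_le hab
  have h : b ^ (q - p) ≤ a ^ (q - p) :=
    Real.rpow_le_rpow hb.le hab (sub_nonneg.2 hpq)
  have e : ∀ c : ℝ, 0 < c → c ^ q = c ^ p * c ^ (q - p) := fun c hc => by
    rw [← Real.rpow_add hc]; congr 1; ring
  rw [e a ha, e b hb]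
  have := mul_le_mul_of_nonneg_left h
    (mul_nonneg (Real.rpow_nonneg ha.le p) (Real.rpow_nonneg hb.le p))
  linarith

lemma prod_rpow_le_swap {n : ℕ} {η v : Fin n → ℝ} (hv : ∀ k, 0 ≤ v k) {i j : Fin n}
    (hij : i ≠ j) (hη : η i ≤ η j) (hj : 0 < v j) (hji : v j ≤ v i) :
    ∏ k, v k ^ η k ≤ ∏ k, v (Equiv.swap i j k) ^ η k := by
  have hmem : j ∈ univ.erase i := by simp [hij.symm]
  rw [← mul_prod_erase _ _ (mem_univ i), ← mul_prod_erase _ _ hmem,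
    ← mul_prod_erase univ (fun k => v (Equiv.swap i j k) ^ η k) (mem_univ i),
    ← mul_prod_erase _ (fun k => v (Equiv.swap i j k) ^ η k) hmem, ← mul_assoc, ← mul_assoc]
  have hrest : ∏ k ∈ (univ.erase i).erase j, v (Equiv.swap i j k) ^ η k =
      ∏ k ∈ (univ.erase i).erase j, v k ^ η k := by
    refine prod_congr rfl fun k hk => ?_
    simp only [mem_erase, mem_univ, and_true] at hk
    rw [Equiv.swap_apply_of_ne_of_ne hk.2 hk.1]
  rw [hrest, Equiv.swap_apply_left, Equiv.swap_apply_right]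
  exact mul_le_mul_of_nonneg_right (rpow_exchange hj hji hη)
    (prod_nonneg fun k _ => Real.rpow_nonneg (hv k) _)

lemma potential_lt_swap {n : ℕ} {v : Fin n → ℝ} {i j : Fin n} (hij : i < j) (hji : v j < v i) :
    ∑ k : Fin n, (k : ℝ) * v k < ∑ k : Fin n, (k : ℝ) * v (Equiv.swap i j k) := by
  rw [← sub_pos, ← sum_sub_distrib, Fintype.sum_eq_add i j hij.ne]
  · rw [Equiv.swap_apply_left, Equiv.swap_apply_right]
    have h : ((i : ℕ) : ℝ) < ((j : ℕ) : ℝ) := by exact_mod_cast hij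
    have := mul_pos (sub_pos.2 h) (sub_pos.2 hji)
    linarith
  · intro k hk
    rw [Equiv.swap_apply_of_ne_of_ne hk.1 hk.2, sub_self]

/-- There exists a Nash-welfare-maximizing allocation whose (positive) bundle
values are nondecreasing along the agents ordered by nondecreasing weights. -/
theorem stmt_0 (n : ℕ) (hn : 1 ≤ n) (η : Fin n → ℝ) (hη : ∀ i, 0 < η i)
    (hmono : ∀ i j : Fin n, i ≤ j → η i ≤ η j)
    (M : Type*) [Fintype M] (u : M → ℝ) (hu : ∀ j, 0 ≤ u j) :
    ∃ x : M → Fin n,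
      (∀ y : M → Fin n,
        (∏ i, (∑ j ∈ univ.filter (fun j => y j = i), u j) ^ η i) ^ (1 / ∑ i, η i) ≤
        (∏ i, (∑ j ∈ univ.filter (fun j => x j = i), u j) ^ η i) ^ (1 / ∑ i, η i)) ∧
      (∀ i j : Fin n, i < j →
        0 < ∑ g ∈ univ.filter (fun g => x g = i), u g →
        0 < ∑ g ∈ univ.filter (fun g => x g = j), u g →
        ∑ g ∈ univ.filter (fun g => x g = i), u g ≤
          ∑ g ∈ univ.filter (fun g => x g = j), u g) := by
  change ∃ x : M → Fin n,
      (∀ y : M → Fin n, (∏ i, bundleValue u y i ^ η i) ^ (1 / ∑ i, η i) ≤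
        (∏ i, bundleValue u x i ^ η i) ^ (1 / ∑ i, η i)) ∧
      (∀ i j : Fin n, i < j → 0 < bundleValue u x i → 0 < bundleValue u x j →
        bundleValue u x i ≤ bundleValue u x j)
  have : Nonempty (Fin n) := ⟨⟨0, hn⟩⟩
  let W : (M → Fin n) → ℝ := fun x => (∏ i, bundleValue u x i ^ η i) ^ (1 / ∑ i, η i)
  obtain ⟨x₀, hx₀⟩ := Finite.exists_max W
  have : Nonempty {x : M → Fin n // ∀ y, W y ≤ W x} := ⟨⟨x₀, hx₀⟩⟩
  obtain ⟨⟨x, hx⟩, hmax⟩ := Finite.exists_max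
    (fun x : {x : M → Fin n // ∀ y, W y ≤ W x} => ∑ k : Fin n, (k : ℝ) * bundleValue u x.1 k)
  refine ⟨x, hx, fun i j hij _ hj => ?_⟩
  by_contra! hlt
  have hW : W x ≤ W (fun g => Equiv.swap i j (x g)) := by
    simp only [W, bundleValue_perm]
    refine Real.rpow_le_rpow
      (prod_nonneg fun k _ => Real.rpow_nonneg (bundleValue_nonneg hu x k) _)
      (prod_rpow_le_swap (bundleValue_nonneg hu x) hij.ne (hmono i j hij.le) hj hlt.le) ?_
    exact one_div_nonneg.2 (sum_nonneg fun k _ => (hη k).le)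
  have hle := hmax ⟨fun g => Equiv.swap i j (x g), fun y => (hx y).trans hW⟩
  simp only [bundleValue_perm] at hle
  exact (potential_lt_swap hij hlt).not_ge hle
end

section
/- Fix δ ∈ (0,1) and a real number u > 0. There is a largest integer z ∈ ℤ such that u > δ·2^z; set w = 2^z and define the rounded value r(u) = ⌈u/(δ²·w)⌉ · δ²·w. Then u ≤ r(u) < (1+δ)·u. -/
/-- The rounding function of the PTAS: for `u > 0` there is a largest integer `z`
with `u > δ * 2 ^ z`, and rounding `u` up to the next integer multiple of
`δ² * 2 ^ z` yields a value `r u` with `u ≤ r u < (1 + δ) * u`. -/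
theorem stmt_2 (δ u : ℝ) (hδ : δ ∈ Set.Ioo (0 : ℝ) 1) (hu : 0 < u) :
    ∃ z : ℤ, (u > δ * 2 ^ z ∧ ∀ z' : ℤ, u > δ * 2 ^ z' → z' ≤ z) ∧
      u ≤ (⌈u / (δ ^ 2 * 2 ^ z)⌉ : ℝ) * (δ ^ 2 * 2 ^ z) ∧
      (⌈u / (δ ^ 2 * 2 ^ z)⌉ : ℝ) * (δ ^ 2 * 2 ^ z) < (1 + δ) * u := by
  have hδ0 : 0 < δ := hδ.1
  -- The exponent is the one with `2 ^ z < u / δ ≤ 2 ^ (z + 1)`.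
  obtain ⟨z, hz, hz'⟩ := exists_mem_Ioc_zpow (div_pos hu hδ0) (one_lt_two (α := ℝ))
  rw [lt_div_iff₀' hδ0] at hz
  have hs : 0 < δ ^ 2 * (2 : ℝ) ^ z := by positivity
  refine ⟨z, ⟨hz, fun z' h => ?_⟩, (div_le_iff₀ hs).1 (Int.le_ceil _), ?_⟩
  · have h' : (2 : ℝ) ^ z' < 2 ^ (z + 1) := ((lt_div_iff₀' hδ0).2 h).trans_le hz'
    exact Int.lt_add_one_iff.1 ((zpow_lt_zpow_iff_right₀ one_lt_two).1 h')
  · -- Rounding up adds less than one step `δ² * 2 ^ z`, and `δ * 2 ^ z < u` bounds it by `δ * u`.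
    calc (⌈u / (δ ^ 2 * 2 ^ z)⌉ : ℝ) * (δ ^ 2 * 2 ^ z)
        < (u / (δ ^ 2 * 2 ^ z) + 1) * (δ ^ 2 * 2 ^ z) :=
          mul_lt_mul_of_pos_right (Int.ceil_lt_add_one _) hs
      _ = u + δ * (δ * 2 ^ z) := by field_simp
      _ < u + δ * u := by gcongr
      _ = (1 + δ) * u := by ring
end

section
/- Fix δ ∈ (0,1) and a real number u > 0, and define r(u) = ⌈u/(δ²·2^z)⌉ · δ²·2^z where z ∈ ℤ is the largest integer with u > δ·2^z. Then for every integer z' ∈ ℤ such that δ·2^{z'} < u ≤ 2^{z'}, the rounded value r(u) is an integer multiple of δ²·2^{z'}. -/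
/-- If `z` is the largest integer with `u > δ * 2 ^ z`, then for every integer
`z'` with `δ * 2 ^ z' < u ≤ 2 ^ z'`, the rounded value
`r u = ⌈u / (δ² * 2 ^ z)⌉ * δ² * 2 ^ z` is an integer multiple of `δ² * 2 ^ z'`. -/
theorem stmt_3 (δ u : ℝ) (hδ : δ ∈ Set.Ioo (0 : ℝ) 1) (hu : 0 < u)
    (z : ℤ) (hz : u > δ * 2 ^ z) (hzmax : ∀ z' : ℤ, u > δ * 2 ^ z' → z' ≤ z)
    (z' : ℤ) (h1 : δ * 2 ^ z' < u) (h2 : u ≤ 2 ^ z') :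
    ∃ k : ℤ, (⌈u / (δ ^ 2 * 2 ^ z)⌉ : ℝ) * (δ ^ 2 * 2 ^ z) = k * (δ ^ 2 * 2 ^ z') := by
  -- Maximality of `z` gives `z' ≤ z`, so `2 ^ z` is a natural power of two times `2 ^ z'`.
  obtain ⟨n, hn⟩ := Int.le.dest (hzmax z' h1)
  refine ⟨⌈u / (δ ^ 2 * 2 ^ z)⌉ * 2 ^ n, ?_⟩
  have hpow : (2 : ℝ) ^ z = 2 ^ z' * 2 ^ n := by
    rw [← hn, zpow_add₀ two_ne_zero, zpow_natCast]
  push_cast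
  generalize (⌈u / (δ ^ 2 * 2 ^ z)⌉ : ℝ) = c
  rw [hpow]
  ring
end

section
/- Let δ ∈ (0,1) and w > 0 be reals. Let A ⊆ B be finite sets of goods with values u_j > 0 for j ∈ B, and let r_j be reals satisfying u_j ≤ r_j < (1+δ)·u_j for every j ∈ B. Suppose p and q are reals such that |Σ_{j∈A, u_j ≤ δw} r_j − p·δw| < δw and |Σ_{j∈B, u_j ≤ δw} r_j − q·δw| < δw. Define D = Σ_{j∈B∖A, u_j > δw} r_j + (q − p)·δw. Then Σ_{j∈B∖A} u_j − 2δw < D < (1+δ)·Σ_{j∈B∖A} u_j + 2δw. -/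
/-!
Let `D` be the quantity bounded on both sides. The rounded value of `B \ A` splits into its large part, which occurs literally in `D`, and its
small part, which equals the small rounded value of `B` minus that of `A`. The latter difference
is approximated by `(q - p) * (δ * w)` with error less than `2 * δ * w`, by the triangle inequality.
Hence `D` is within `2 * δ * w` of `∑ j ∈ B \ A, r j`, and this sum lies between `∑ j ∈ B \ A, u j`
and `(1 + δ) * ∑ j ∈ B \ A, u j` by the termwise rounding bounds. Both final inequalities are strict
even when `B \ A` is empty, because the approximation errors are strictly bounded.
-/

open Finset

/-- The successive-error lemma of the PTAS. -/
theorem stmt_4 {G : Type*} [DecidableEq G] (δ w : ℝ) (hδ : δ ∈ Set.Ioo (0 : ℝ) 1)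
    (hw : 0 < w) (A B : Finset G) (hAB : A ⊆ B) (u r : G → ℝ)
    (hu : ∀ j ∈ B, 0 < u j)
    (hr : ∀ j ∈ B, u j ≤ r j ∧ r j < (1 + δ) * u j)
    (p q : ℝ)
    (hp : |(∑ j ∈ A.filter (fun j => u j ≤ δ * w), r j) - p * (δ * w)| < δ * w)
    (hq : |(∑ j ∈ B.filter (fun j => u j ≤ δ * w), r j) - q * (δ * w)| < δ * w) :
    (∑ j ∈ B \ A, u j) - 2 * δ * w <
        (∑ j ∈ (B \ A).filter (fun j => δ * w < u j), r j) + (q - p) * (δ * w) ∧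
      (∑ j ∈ (B \ A).filter (fun j => δ * w < u j), r j) + (q - p) * (δ * w) <
        (1 + δ) * (∑ j ∈ B \ A, u j) + 2 * δ * w := by
  have hmem : ∀ j ∈ B \ A, j ∈ B := fun j hj => (Finset.mem_sdiff.mp hj).1
  have h_lower : ∑ j ∈ B \ A, u j ≤ ∑ j ∈ B \ A, r j :=
    Finset.sum_le_sum fun j hj => (hr j (hmem j hj)).1
  have h_upper : ∑ j ∈ B \ A, r j ≤ (1 + δ) * ∑ j ∈ B \ A, u j := by
    rw [Finset.mul_sum]
    exact Finset.sum_le_sum fun j hj => (hr j (hmem j hj)).2.le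
  have h_split : (∑ j ∈ (B \ A).filter (fun j => u j ≤ δ * w), r j) +
      (∑ j ∈ (B \ A).filter (fun j => δ * w < u j), r j) = ∑ j ∈ B \ A, r j := by
    simpa only [not_le] using
      Finset.sum_filter_add_sum_filter_not (B \ A) (fun j => u j ≤ δ * w) r
  have h_small : (∑ j ∈ (B \ A).filter (fun j => u j ≤ δ * w), r j) +
      (∑ j ∈ A.filter (fun j => u j ≤ δ * w), r j) =
      ∑ j ∈ B.filter (fun j => u j ≤ δ * w), r j := by
    simp only [Finset.sum_filter]
    exact Finset.sum_sdiff hAB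
  rw [abs_lt] at hp hq
  constructor <;> linarith [hp.1, hp.2, hq.1, hq.2]
end

section
/- Let n ≥ 1, let η_1,…,η_n > 0 be real weights, and let δ ∈ (0, 1/12]. Suppose for each i there are reals C_i ≥ 0, C'_i, and w_i > 0 with C'_i ≥ w_i/3 and |C_i − C'_i| ≤ δ·C_i + 2δ·w_i. Then |C − C'| ≤ 8δ·C', where C = (∏_{i=1}^n C_i^{η_i})^{1/Σ_i η_i} and C' = (∏_{i=1}^n (C'_i)^{η_i})^{1/Σ_i η_i} are weighted geometric means (real exponentiation, with 0^t = 0 for t > 0). -/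
open Finset

/-!
The hypothesis `w i ≤ 3 * C' i` turns `|C i - C' i| ≤ δ * C i + 2 * δ * w i` into
`|C i - C' i| ≤ δ * C i + 6 * δ * C' i`, whence `(1 - 8δ) * C' i ≤ C i ≤ (1 + 8δ) * C' i` because
`δ ≤ 1 / 8`. The weighted geometric mean is monotone and homogeneous of degree one, so it inherits
both bounds.
-/

/-- The weighted geometric mean is homogeneous of degree one. -/
lemma geomMean_const_mul {n : ℕ} {η : Fin n → ℝ} (hs : 0 < ∑ i, η i) {k : ℝ} (hk : 0 ≤ k)
    {x : Fin n → ℝ} (hx : ∀ i, 0 ≤ x i) (hη : ∀ i, 0 < η i) :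
    (∏ i, (k * x i) ^ η i) ^ (1 / ∑ i, η i) = k * (∏ i, x i ^ η i) ^ (1 / ∑ i, η i) := by
  have h1 : ∏ i, (k * x i) ^ η i = k ^ (∑ i, η i) * ∏ i, x i ^ η i := by
    rw [Real.rpow_sum_of_nonneg hk fun i _ => (hη i).le, ← Finset.prod_mul_distrib]
    exact Finset.prod_congr rfl fun i _ => Real.mul_rpow hk (hx i)
  rw [h1, Real.mul_rpow (Real.rpow_nonneg hk _)
    (Finset.prod_nonneg fun i _ => Real.rpow_nonneg (hx i) _), ← Real.rpow_mul hk,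
    mul_one_div_cancel hs.ne', Real.rpow_one]

lemma geomMean_mono {n : ℕ} {η : Fin n → ℝ} (hη : ∀ i, 0 < η i)
    {x y : Fin n → ℝ} (hx : ∀ i, 0 ≤ x i) (hxy : ∀ i, x i ≤ y i) :
    (∏ i, x i ^ η i) ^ (1 / ∑ i, η i) ≤ (∏ i, y i ^ η i) ^ (1 / ∑ i, η i) := by
  refine Real.rpow_le_rpow (Finset.prod_nonneg fun i _ => Real.rpow_nonneg (hx i) _) ?_
    (one_div_nonneg.2 (Finset.sum_nonneg fun i _ => (hη i).le))
  exact Finset.prod_le_prod (fun i _ => Real.rpow_nonneg (hx i) _)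
    fun i _ => Real.rpow_le_rpow (hx i) (hxy i) (hη i).le

/-- The Nash welfare of an allocation and the cost of the corresponding path in
the configuration graph differ by at most a factor 8δ. -/
theorem stmt_7 (n : ℕ) (hn : 1 ≤ n) (η : Fin n → ℝ) (hη : ∀ i, 0 < η i)
    (δ : ℝ) (hδ : δ ∈ Set.Ioc (0 : ℝ) (1 / 12))
    (C C' w : Fin n → ℝ) (hC : ∀ i, 0 ≤ C i) (hw : ∀ i, 0 < w i)
    (hC' : ∀ i, C' i ≥ w i / 3)
    (h : ∀ i, |C i - C' i| ≤ δ * C i + 2 * δ * w i) :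
    |(∏ i, C i ^ η i) ^ (1 / ∑ i, η i) - (∏ i, C' i ^ η i) ^ (1 / ∑ i, η i)| ≤
      8 * δ * (∏ i, C' i ^ η i) ^ (1 / ∑ i, η i) := by
  obtain ⟨hδ0, hδ1⟩ := hδ
  have hs : 0 < ∑ i, η i := Finset.sum_pos (fun i _ => hη i) ⟨⟨0, hn⟩, Finset.mem_univ _⟩
  have hC'0 : ∀ i, 0 ≤ C' i := fun i => by linarith [hC' i, hw i]
  have hδw : ∀ i, δ * w i ≤ δ * (3 * C' i) := fun i =>
    mul_le_mul_of_nonneg_left (by linarith [hC' i]) hδ0.le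
  have hup : ∀ i, C i ≤ (1 + 8 * δ) * C' i := fun i => by
    have h1 := (abs_le.1 (h i)).2
    have h2 : (1 - δ) * C i ≤ (1 - δ) * ((1 + 8 * δ) * C' i) := by
      -- `(1 - δ) * (1 + 8δ) - (1 + 6δ) = δ * (1 - 8δ)`
      have h3 : 0 ≤ δ * (1 - 8 * δ) * C' i :=
        mul_nonneg (mul_nonneg hδ0.le (by linarith)) (hC'0 i)
      linarith [hδw i]
    exact le_of_mul_le_mul_left h2 (by linarith)
  have hlo : ∀ i, (1 - 8 * δ) * C' i ≤ C i := fun i => by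
    have h1 := (abs_le.1 (h i)).1
    have h2 : (1 + δ) * ((1 - 8 * δ) * C' i) ≤ (1 + δ) * C i := by
      -- `(1 - 6δ) - (1 + δ) * (1 - 8δ) = δ * (1 + 8δ)`
      have h3 : 0 ≤ δ * (1 + 8 * δ) * C' i :=
        mul_nonneg (mul_nonneg hδ0.le (by linarith)) (hC'0 i)
      linarith [hδw i]
    exact le_of_mul_le_mul_left h2 (by linarith)
  have h8 : 0 ≤ 1 - 8 * δ := by linarith
  have hU := geomMean_mono hη hC hup
  have hL := geomMean_mono hη (fun i => mul_nonneg h8 (hC'0 i)) hlo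
  rw [geomMean_const_mul hs (by linarith) hC'0 hη] at hU
  rw [geomMean_const_mul hs h8 hC'0 hη] at hL
  rw [abs_le]
  constructor <;> linarith
end

section
/- Let n agents have positive real weights η_1,…,η_n and identical additive valuations over a finite set of goods M given by values u_g ≥ 0, with v(S) = Σ_{g∈S} u_g. Let x be an allocation (a partition of M into bundles x_1,…,x_n) such that v(x_k) > 0 for every agent k ≠ i. Suppose agent i wwEF1-envies agent h, i.e., x_h ≠ ∅ and for every good g ∈ x_h it holds that v(x_i)/η_i < v(x_h)/η_h − u_g/min(η_i,η_h). Let j ∈ x_h be a good with u_j > 0, and let x' be the allocation obtained from x by moving j from x_h to x_i. Then NW(x') > NW(x), where NW(y) = (∏_k v(y_k)^{η_k})^{1/Σ_k η_k}. -/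
open Finset

/-!
Only the bundles of `i` and `h` change, so with `a = v(x_i)`, `b = v(x_h)`, `c = u_j`, `p = η_i`,
`q = η_h` everything reduces to `a ^ p * b ^ q < (a + c) ^ p * (b - c) ^ q`, given
`a / p < b / q - c / min p q`. Taking `q`-th roots, this follows from Bernoulli's inequality for
real exponents applied with exponent `p / q`: its concave form if `p ≤ q`
(`transfer_of_le`), its convex form if `q ≤ p` (`transfer_of_ge`). If `a = 0` the left side
vanishes and the right side is positive.
-/

lemma transfer_of_le {a b c p q : ℝ} (ha : 0 < a) (hc : 0 < c) (hp : 0 < p) (hq : 0 < q)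
    (hbc : 0 < b - c) (hpq : p ≤ q) (hab : (a + c) / p < b / q) :
    a ^ p * b ^ q < (a + c) ^ p * (b - c) ^ q := by
  have hb : 0 < b := by linarith
  have hac : 0 < a + c := by linarith
  have hbern := rpow_one_add_le_one_add_mul_self (s := -c / (a + c)) (p := p / q)
    (by rw [le_div_iff₀ hac]; linarith) (by positivity) ((div_le_one hq).2 hpq)
  have e1 : 1 + -c / (a + c) = a / (a + c) := by field_simp; ring
  have e2 : 1 + p / q * (-c / (a + c)) < (b - c) / b := by
    have e3 : c / b < p / q * (c / (a + c)) := by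
      rw [div_lt_div_iff₀ hp hq] at hab
      rw [div_mul_div_comm, div_lt_div_iff₀ hb (by positivity)]
      nlinarith
    have e4 : (b - c) / b = 1 - c / b := by field_simp
    rw [e4, neg_div]
    linarith
  rw [e1] at hbern
  have h1 := Real.rpow_lt_rpow (by positivity) (hbern.trans_lt e2) hq
  rw [← Real.rpow_mul (by positivity), div_mul_cancel₀ _ hq.ne', Real.div_rpow ha.le hac.le,
    Real.div_rpow hbc.le hb.le, div_lt_div_iff₀ (by positivity) (by positivity)] at h1
  linarith

lemma transfer_of_ge {a b c p q : ℝ} (ha : 0 < a) (hc : 0 < c) (hp : 0 < p) (hq : 0 < q)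
    (hbc : 0 < b - c) (hpq : q ≤ p) (hab : a / p < (b - c) / q) :
    a ^ p * b ^ q < (a + c) ^ p * (b - c) ^ q := by
  have hb : 0 < b := by linarith
  have hac : 0 < a + c := by linarith
  have hca : 0 < c / a := by positivity
  have hbern := one_add_mul_self_le_rpow_one_add (s := c / a) (p := p / q)
    (by linarith) ((one_le_div hq).2 hpq)
  have e1 : 1 + c / a = (a + c) / a := by field_simp
  have e2 : b / (b - c) < 1 + p / q * (c / a) := by
    have e3 : c / (b - c) < p / q * (c / a) := by
      rw [div_lt_div_iff₀ hp hq] at hab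
      rw [div_mul_div_comm, div_lt_div_iff₀ hbc (by positivity)]
      nlinarith
    have e4 : b / (b - c) = 1 + c / (b - c) := by field_simp; ring
    rw [e4]
    linarith
  rw [e1] at hbern
  have h1 := Real.rpow_lt_rpow (by positivity) (e2.trans_le hbern) hq
  rw [← Real.rpow_mul (by positivity), div_mul_cancel₀ _ hq.ne', Real.div_rpow hac.le ha.le,
    Real.div_rpow hb.le hbc.le, div_lt_div_iff₀ (by positivity) (by positivity)] at h1
  linarith

/-- The two-agent inequality, without assuming `a > 0` or an order between `p` and `q`; the envy
hypothesis already forces `c < b`, because `c / q ≤ c / min p q < b / q`. -/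
lemma transfer_lt {a b c p q : ℝ} (ha : 0 ≤ a) (hc : 0 < c) (hp : 0 < p) (hq : 0 < q)
    (hab : a / p < b / q - c / min p q) :
    a ^ p * b ^ q < (a + c) ^ p * (b - c) ^ q := by
  have hbc : 0 < b - c := by
    have h1 : c / q ≤ c / min p q :=
      div_le_div_of_nonneg_left hc.le (lt_min hp hq) (min_le_right _ _)
    have h2 : 0 ≤ a / p := by positivity
    have h3 : c / q < b / q := by linarith
    have := (div_lt_div_iff_of_pos_right hq).1 h3
    linarith
  rcases ha.eq_or_lt with rfl | ha
  · rw [Real.zero_rpow hp.ne', zero_mul, zero_add]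
    positivity
  rcases le_total p q with hpq | hpq
  · rw [min_eq_left hpq] at hab
    exact transfer_of_le ha hc hp hq hbc hpq (by rw [add_div]; linarith)
  · rw [min_eq_right hpq] at hab
    exact transfer_of_ge ha hc hp hq hbc hpq (by rw [sub_div]; linarith)

/-- Transferring a good from a wwEF1-envied agent to the envying agent strictly
increases the Nash welfare (identical additive valuations). -/
theorem stmt_9 (n : ℕ) (η : Fin n → ℝ) (hη : ∀ k, 0 < η k)
    {M : Type*} [Fintype M] [DecidableEq M] (u : M → ℝ) (hu : ∀ g, 0 ≤ u g)
    (x : M → Fin n) (i h : Fin n) (hih : i ≠ h)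
    (hpos : ∀ k, k ≠ i → 0 < ∑ g ∈ univ.filter (fun g => x g = k), u g)
    (henvy : ∀ g ∈ univ.filter (fun g => x g = h),
      (∑ g' ∈ univ.filter (fun g' => x g' = i), u g') / η i <
        (∑ g' ∈ univ.filter (fun g' => x g' = h), u g') / η h -
          u g / min (η i) (η h))
    (j : M) (hj : x j = h) (hju : 0 < u j) :
    (∏ k, (∑ g ∈ univ.filter (fun g => x g = k), u g) ^ η k) ^ (1 / ∑ k, η k) <
      (∏ k, (∑ g ∈ univ.filter (fun g => Function.update x j i g = k), u g) ^ η k) ^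
        (1 / ∑ k, η k) := by
  have hsum : 0 < ∑ k, η k := sum_pos (fun k _ => hη k) ⟨i, mem_univ i⟩
  have hnn : ∀ k, 0 ≤ ∑ g ∈ univ.filter (fun g => x g = k), u g :=
    fun k => sum_nonneg fun g _ => hu g
  have hi : ∑ g ∈ univ.filter (fun g => Function.update x j i g = i), u g =
      (∑ g ∈ univ.filter (fun g => x g = i), u g) + u j := by
    have : univ.filter (fun g => Function.update x j i g = i) =
        insert j (univ.filter (fun g => x g = i)) := by
      ext g
      by_cases hg : g = j <;> simp [Function.update_apply, hg]
    rw [this, sum_insert (by simp [hj, hih.symm]), add_comm]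
  have hh : ∑ g ∈ univ.filter (fun g => Function.update x j i g = h), u g =
      (∑ g ∈ univ.filter (fun g => x g = h), u g) - u j := by
    have : univ.filter (fun g => Function.update x j i g = h) =
        (univ.filter (fun g => x g = h)).erase j := by
      ext g
      by_cases hg : g = j <;> simp [Function.update_apply, hg, hih]
    rw [this, sum_erase_eq_sub (by simp [hj])]
  have hk : ∀ k, k ≠ i → k ≠ h → univ.filter (fun g => Function.update x j i g = k) =
      univ.filter (fun g => x g = k) := by
    intro k hki hkh
    ext g
    by_cases hg : g = j <;> simp [Function.update_apply, hg, hj, hki.symm, hkh.symm]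
  have hlt := transfer_lt (hnn i) hju (hη i) (hη h) (henvy j (by simp [hj]))
  refine Real.rpow_lt_rpow (prod_nonneg fun k _ => Real.rpow_nonneg (hnn k) _) ?_ (by positivity)
  have hmem : h ∈ (univ : Finset (Fin n)).erase i := by simp [hih.symm]
  rw [← mul_prod_erase univ _ (mem_univ i), ← mul_prod_erase _ _ hmem,
    ← mul_prod_erase univ (fun k => (∑ g ∈ univ.filter
      (fun g => Function.update x j i g = k), u g) ^ η k) (mem_univ i),
    ← mul_prod_erase _ (fun k => (∑ g ∈ univ.filter
      (fun g => Function.update x j i g = k), u g) ^ η k) hmem, ← mul_assoc, ← mul_assoc]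
  have hrest : ∏ k ∈ ((univ : Finset (Fin n)).erase i).erase h,
      (∑ g ∈ univ.filter (fun g => Function.update x j i g = k), u g) ^ η k =
      ∏ k ∈ ((univ : Finset (Fin n)).erase i).erase h,
        (∑ g ∈ univ.filter (fun g => x g = k), u g) ^ η k := by
    refine prod_congr rfl fun k hkm => ?_
    simp only [mem_erase, mem_univ, and_true] at hkm
    rw [hk k hkm.2 hkm.1]
  rw [hrest, hi, hh]
  refine mul_lt_mul_of_pos_right hlt (prod_pos fun k hkm => Real.rpow_pos_of_pos (hpos k ?_) _)
  simp only [mem_erase, mem_univ, and_true] at hkm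
  exact hkm.2
end

section
/- Let η_i ≥ η_h > 0, v_i > 0, and 0 < u < v_h be real numbers such that v_i/η_i < (v_h − u)/η_h. Then (v_i + u)^{η_i} · (v_h − u)^{η_h} > v_i^{η_i} · v_h^{η_h} (real exponentiation). -/
/-! Put `t = ηi / ηh ≥ 1`. Bernoulli's inequality gives `(1 + u / vi) ^ t ≥ 1 + t * (u / vi)`, and
the envy hypothesis says exactly that `t / vi > 1 / (vh - u)`, so
`(1 + u / vi) ^ t > 1 + u / (vh - u) = vh / (vh - u)`. Clearing denominators and raising to the
power `ηh > 0` gives the claim. -/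

/-- Transferring a good of value `u` from agent `h` to agent `i` with
`η i ≥ η h` strictly increases the weighted product of utilities. -/
theorem stmt_12 (ηi ηh vi vh u : ℝ) (hηh : 0 < ηh) (hηih : ηh ≤ ηi)
    (hvi : 0 < vi) (hu : 0 < u) (huvh : u < vh)
    (henvy : vi / ηi < (vh - u) / ηh) :
    vi ^ ηi * vh ^ ηh < (vi + u) ^ ηi * (vh - u) ^ ηh := by
  have hηi : 0 < ηi := hηh.trans_le hηih
  have hw : 0 < vh - u := sub_pos.2 huvh
  have hvh : 0 < vh := hu.trans huvh
  have hs : 0 < u / vi := div_pos hu hvi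
  have bernoulli : 1 + ηi / ηh * (u / vi) ≤ (1 + u / vi) ^ (ηi / ηh) :=
    one_add_mul_self_le_rpow_one_add (by linarith) ((one_le_div hηh).2 hηih)
  have envy : vh / (vh - u) < 1 + ηi / ηh * (u / vi) := by
    rw [div_lt_div_iff₀ hηi hηh] at henvy
    have h1 : vh / (vh - u) = 1 + u / (vh - u) := by
      field_simp
      ring
    have h2 : u / (vh - u) < ηi / ηh * (u / vi) := by
      rw [div_mul_div_comm, div_lt_div_iff₀ hw (mul_pos hηh hvi)]
      nlinarith [mul_lt_mul_of_pos_left henvy hu]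
    linarith
  have key : (vh / (vh - u)) ^ ηh < (1 + u / vi) ^ ηi := by
    have h := Real.rpow_lt_rpow (by positivity) (envy.trans_le bernoulli) hηh
    rwa [← Real.rpow_mul (by positivity), div_mul_cancel₀ _ hηh.ne'] at h
  have hsum : 1 + u / vi = (vi + u) / vi := by
    field_simp
  rw [hsum, Real.div_rpow hvh.le hw.le, Real.div_rpow (by positivity) hvi.le,
    div_lt_div_iff₀ (Real.rpow_pos_of_pos hw _) (Real.rpow_pos_of_pos hvi _)] at key
  rwa [mul_comm (vi ^ ηi)]
end

section
/- Let 0 < η_i ≤ η_h, v_i > 0, and u > 0 be real numbers, and let v_h be a real with (v_i + u)/η_i < v_h/η_h (which forces v_h > u). Then (v_i + u)^{η_i} · (v_h − u)^{η_h} > v_i^{η_i} · v_h^{η_h} (real exponentiation). -/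
/-!
Put `t = ηh / ηi ≥ 1`. The envy hypothesis says `t * (vi + u) < vh`, so Bernoulli's inequality gives
`(1 - u / vh) ^ t ≥ 1 - t * (u / vh) > 1 - u / (vi + u) = vi / (vi + u)`.
Raising this to the power `ηi` and multiplying by `(vi + u) ^ ηi * vh ^ ηh` yields the claim.
-/

/-- Transferring a good of value `u` from agent `h` to agent `i` with
`η i ≤ η h` strictly increases the weighted product of utilities. -/
theorem stmt_13 (ηi ηh vi vh u : ℝ) (hηi : 0 < ηi) (hηih : ηi ≤ ηh)
    (hvi : 0 < vi) (hu : 0 < u)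
    (henvy : (vi + u) / ηi < vh / ηh) :
    vi ^ ηi * vh ^ ηh < (vi + u) ^ ηi * (vh - u) ^ ηh := by
  have hηh : 0 < ηh := hηi.trans_le hηih
  have hA : 0 < vi + u := by positivity
  have ht : 1 ≤ ηh / ηi := (one_le_div hηi).2 hηih
  have htA : ηh / ηi * (vi + u) < vh := by
    rw [lt_div_iff₀ hηh] at henvy
    calc ηh / ηi * (vi + u) = (vi + u) / ηi * ηh := by ring
      _ < vh := henvy
  have hAvh : vi + u < vh := (le_mul_of_one_le_left hA.le ht).trans_lt htA
  have hvh : 0 < vh := hA.trans hAvh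
  have hs : 0 < 1 - u / vh := by
    rw [sub_pos, div_lt_one hvh]
    linarith
  have hbern : 1 - ηh / ηi * (u / vh) ≤ (1 - u / vh) ^ (ηh / ηi) := by
    have h := one_add_mul_self_le_rpow_one_add (s := -(u / vh)) (by linarith) ht
    rwa [mul_neg, ← sub_eq_add_neg, ← sub_eq_add_neg] at h
  have hbase : vi < (vi + u) * (1 - u / vh) ^ (ηh / ηi) := by
    have h1 : ηh / ηi * (vi + u) * (u / vh) < u := by
      calc ηh / ηi * (vi + u) * (u / vh) < vh * (u / vh) := by gcongr
        _ = u := by field_simp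
    have h2 := mul_le_mul_of_nonneg_left hbern hA.le
    linarith
  have hpow : vi ^ ηi < (vi + u) ^ ηi * (1 - u / vh) ^ ηh := by
    have h := Real.rpow_lt_rpow hvi.le hbase hηi
    rwa [Real.mul_rpow hA.le (Real.rpow_nonneg hs.le _), ← Real.rpow_mul hs.le,
      div_mul_cancel₀ _ hηi.ne'] at h
  calc vi ^ ηi * vh ^ ηh
      < (vi + u) ^ ηi * (1 - u / vh) ^ ηh * vh ^ ηh :=
        mul_lt_mul_of_pos_right hpow (Real.rpow_pos_of_pos hvh _)
    _ = (vi + u) ^ ηi * (vh - u) ^ ηh := by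
        rw [mul_assoc, ← Real.mul_rpow hs.le hvh.le, sub_mul, one_mul,
          div_mul_cancel₀ _ hvh.ne']
end

section
/- Let n agents have positive real weights η_1,…,η_n and identical additive valuations over a finite set of goods M given by values u_g ≥ 0, with v(S) = Σ_{g∈S} u_g. Let x be an allocation maximizing the Nash welfare NW(y) = (∏_k v(y_k)^{η_k})^{1/Σ_k η_k} over all allocations, and suppose NW(x) > 0. Then x is wwEF1: for every pair of agents i, h, either v(x_i)/η_i ≥ v(x_h)/η_h, or there exists a good j ∈ x_h with v(x_i)/η_i ≥ v(x_h)/η_h − u_j/min(η_i, η_h). -/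
/-!
Suppose agent `i` has bundle value `a` and weight `p`, agent `h` has bundle value `b` and weight
`q`, and the wwEF1 condition fails for `(i, h)`. Positive Nash welfare gives `a, b > 0`, so `h`
owns a good `j` of value `w > 0`, and `a / p < b / q - w / min p q`. Handing `j` to `i` then
strictly increases the product of the two affected factors of the welfare:
`a ^ p * b ^ q < (a + w) ^ p * (b - w) ^ q` (`rpow_mul_rpow_lt_of_transfer`), contradicting
maximality. The inequality is Bernoulli's: it bounds `(1 + w / a) ^ (p / q)` when `q ≤ p` and
`(1 - w / b) ^ (q / p)` when `p ≤ q`, with the exponent at least `1` in each case. Failure of wwEF1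
for `j` is exactly what makes this bound exceed `b / (b - w)`, respectively `a / (a + w)`.
-/

open Finset

/-- Transferring a good of value `w` against which wwEF1 fails strictly increases the joint
weighted product of the two agents, and the giver keeps positive value. -/
lemma rpow_mul_rpow_lt_of_transfer {a b p q w : ℝ} (ha : 0 < a) (hb : 0 < b) (hp : 0 < p)
    (hq : 0 < q) (hw : 0 < w) (h : a / p < b / q - w / min p q) :
    w < b ∧ a ^ p * b ^ q < (a + w) ^ p * (b - w) ^ q := by
  rcases le_total p q with hpq | hpq
  · rw [min_eq_left hpq] at h
    have key : q * (a + w) < p * b := by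
      have h1 : (a + w) / p < b / q := by rw [add_div]; linarith
      rw [div_lt_div_iff₀ hp hq] at h1
      linarith
    have hwb : w < b := by nlinarith
    refine ⟨hwb, ?_⟩
    have hbern : 1 + q / p * (-(w / b)) ≤ (1 + -(w / b)) ^ (q / p) :=
      one_add_mul_self_le_rpow_one_add (by
        have : w / b < 1 := (div_lt_one hb).2 hwb
        linarith) ((one_le_div hp).2 hpq)
    have e : 1 + -(w / b) = (b - w) / b := by field_simp; ring
    have hlt : a / (a + w) < 1 + q / p * (-(w / b)) := by
      have h2 : 1 + q / p * (-(w / b)) - a / (a + w)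
          = w * (p * b - q * (a + w)) / (p * b * (a + w)) := by
        field_simp; ring
      have h3 : 0 < w * (p * b - q * (a + w)) / (p * b * (a + w)) :=
        div_pos (mul_pos hw (by linarith)) (by positivity)
      linarith
    rw [e] at hbern
    have hbw : 0 < b - w := by linarith
    have h4 := Real.rpow_lt_rpow (by positivity) (hlt.trans_le hbern) hp
    rw [← Real.rpow_mul (by positivity), div_mul_cancel₀ _ hp.ne',
      Real.div_rpow ha.le (by positivity), Real.div_rpow hbw.le hb.le,
      div_lt_div_iff₀ (by positivity) (by positivity)] at h4
    linarith
  · rw [min_eq_right hpq] at h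
    have key : q * a < p * (b - w) := by
      have h1 : a / p < (b - w) / q := by rw [sub_div]; linarith
      rw [div_lt_div_iff₀ hp hq] at h1
      linarith
    have hbw : 0 < b - w := by
      by_contra hc
      nlinarith [mul_pos hq ha]
    refine ⟨by linarith, ?_⟩
    have hbern : 1 + p / q * (w / a) ≤ (1 + w / a) ^ (p / q) :=
      one_add_mul_self_le_rpow_one_add (by
        have : 0 < w / a := by positivity
        linarith) ((one_le_div hq).2 hpq)
    have e : 1 + w / a = (a + w) / a := by field_simp
    have hlt : b / (b - w) < 1 + p / q * (w / a) := by
      have h2 : 1 + p / q * (w / a) - b / (b - w)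
          = w * (p * (b - w) - q * a) / (q * a * (b - w)) := by
        field_simp; ring
      have h3 : 0 < w * (p * (b - w) - q * a) / (q * a * (b - w)) :=
        div_pos (mul_pos hw (by linarith)) (by positivity)
      linarith
    rw [e] at hbern
    have h4 := Real.rpow_lt_rpow (by positivity) (hlt.trans_le hbern) hq
    rw [← Real.rpow_mul (by positivity), div_mul_cancel₀ _ hq.ne',
      Real.div_rpow hb.le hbw.le, Real.div_rpow (by positivity) ha.le,
      div_lt_div_iff₀ (by positivity) (by positivity)] at h4
    linarith

lemma sum_filter_update {ι M : Type*} [DecidableEq ι] [Fintype M] [DecidableEq M] (u : M → ℝ)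
    (x : M → ι) (j : M) (i k : ι) :
    ∑ g ∈ univ.filter (fun g => Function.update x j i g = k), u g =
      (∑ g ∈ univ.filter (fun g => x g = k), u g) + (if i = k then u j else 0)
        - (if x j = k then u j else 0) := by
  have h : ∑ g ∈ univ.erase j, (if Function.update x j i g = k then u g else 0) =
      ∑ g ∈ univ.erase j, (if x g = k then u g else 0) :=
    sum_congr rfl fun g hg => by rw [Function.update_of_ne (ne_of_mem_erase hg)]
  rw [sum_filter, sum_filter, ← add_sum_erase univ _ (mem_univ j),
    ← add_sum_erase univ (fun g => if x g = k then u g else 0) (mem_univ j), h,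
    Function.update_self]
  ring

/-- A maximum Nash welfare allocation with positive Nash welfare is wwEF1
(identical additive valuations, asymmetric agents). -/
theorem stmt_15 (n : ℕ) (η : Fin n → ℝ) (hη : ∀ k, 0 < η k)
    {M : Type*} [Fintype M] (u : M → ℝ) (hu : ∀ g, 0 ≤ u g)
    (x : M → Fin n)
    (hmax : ∀ y : M → Fin n,
      (∏ k, (∑ g ∈ univ.filter (fun g => y g = k), u g) ^ η k) ^ (1 / ∑ k, η k) ≤
        (∏ k, (∑ g ∈ univ.filter (fun g => x g = k), u g) ^ η k) ^ (1 / ∑ k, η k))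
    (hpos :
      0 < (∏ k, (∑ g ∈ univ.filter (fun g => x g = k), u g) ^ η k) ^ (1 / ∑ k, η k)) :
    ∀ i h : Fin n,
      (∑ g ∈ univ.filter (fun g => x g = i), u g) / η i ≥
        (∑ g ∈ univ.filter (fun g => x g = h), u g) / η h ∨
      ∃ j ∈ univ.filter (fun g => x g = h),
        (∑ g ∈ univ.filter (fun g => x g = i), u g) / η i ≥
          (∑ g ∈ univ.filter (fun g => x g = h), u g) / η h -
            u j / min (η i) (η h) := by
  classical
  intro i h
  by_contra! hc
  obtain ⟨hlt, hj⟩ := hc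
  have hS : 0 < ∑ k, η k := sum_pos (fun k _ => hη k) ⟨i, mem_univ i⟩
  have hv0 : ∀ (y : M → Fin n) k, 0 ≤ ∑ g ∈ univ.filter (fun g => y g = k), u g :=
    fun y k => sum_nonneg fun g _ => hu g
  -- A zero bundle would make the Nash welfare zero, since all exponents are positive.
  have hv : ∀ k, 0 < ∑ g ∈ univ.filter (fun g => x g = k), u g := by
    intro k
    refine lt_of_le_of_ne (hv0 x k) fun h0 => hpos.ne' ?_
    rw [prod_eq_zero (mem_univ k) (by rw [← h0, Real.zero_rpow (hη k).ne']),
      Real.zero_rpow (one_div_pos.2 hS).ne']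
  have hih : i ≠ h := by
    rintro rfl
    exact lt_irrefl _ hlt
  obtain ⟨j, hjm, hw⟩ : ∃ j ∈ univ.filter (fun g => x g = h), 0 < u j := by
    by_contra! hn
    exact absurd (sum_nonpos hn) (not_le.2 (hv h))
  have hxj : x j = h := (mem_filter.1 hjm).2
  obtain ⟨-, hgain⟩ :=
    rpow_mul_rpow_lt_of_transfer (hv i) (hv h) (hη i) (hη h) hw (hj j hjm)
  refine absurd (hmax (Function.update x j i)) (not_le.2 ?_)
  refine Real.rpow_lt_rpow (prod_nonneg fun k _ => Real.rpow_nonneg (hv0 x k) _) ?_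
    (one_div_pos.2 hS)
  have hmem : h ∈ univ.erase i := mem_erase.2 ⟨hih.symm, mem_univ h⟩
  rw [← mul_prod_erase univ _ (mem_univ i), ← mul_prod_erase _ _ hmem,
    ← mul_prod_erase univ (fun k => (∑ g ∈ univ.filter
      (fun g => Function.update x j i g = k), u g) ^ η k) (mem_univ i),
    ← mul_prod_erase _ (fun k => (∑ g ∈ univ.filter
      (fun g => Function.update x j i g = k), u g) ^ η k) hmem, ← mul_assoc, ← mul_assoc]
  have hrest : ∏ k ∈ (univ.erase i).erase h,
        (∑ g ∈ univ.filter (fun g => Function.update x j i g = k), u g) ^ η k =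
      ∏ k ∈ (univ.erase i).erase h, (∑ g ∈ univ.filter (fun g => x g = k), u g) ^ η k := by
    refine prod_congr rfl fun k hk => ?_
    have hkh : h ≠ k := (ne_of_mem_erase hk).symm
    have hki : i ≠ k := (ne_of_mem_erase (mem_of_mem_erase hk)).symm
    rw [sum_filter_update, hxj, if_neg hki, if_neg hkh, add_zero, sub_zero]
  rw [hrest]
  refine mul_lt_mul_of_pos_right ?_ (prod_pos fun k _ => Real.rpow_pos_of_pos (hv k) _)
  simpa only [sum_filter_update, hxj, if_true, if_neg hih, if_neg hih.symm, sub_zero, add_zero]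
    using hgain
end
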